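/- arXiv:1606.05772 — 3 statements merged into one kernel-verified Lean document; each statement's English description precedes it below -/
import Mathlib

section
/- Let φ = (1+√5)/2, let ξ ∈ ℝ be fixed, and let A(x,y,z) = (5−√5)yz⁵ + (5+√5)y⁵z − 20y³z³ + (10+10√5)x²yz³ + (10−10√5)x²y³z − 10x⁴yz. Suppose p, q, r: I → ℝ are differentiable on an interval I and satisfy, for all t ∈ I: p′ = −A(p,q,r), q′ = −A(q,r,p), r′ = −A(r,p,q), p² + q² + r² = 1, and (φ²p² − q²)(φ²q² − r²)(φ²r² − p²) = ξ. Define f(X) = 7φX³ − 7φ²X² − (11ξ + 2φ³)X − 7ξφ, g(X) = X³ − 2φX² + φ²X − 4ξ, h(X) = 2X³ − φX² + ξ. Let P = φ²p² − q² and set X(t) = P(t), Y(t) = P′(t). Then for all t ∈ I: X·(Y²φ⁵ + 10·f(X)·g(X))² = 500·h(X)²·g(X)³. In other words, the pair (P, P′) parametrizes the algebraic curve X(Y²φ⁵ + 10f(X)g(X))² = 500h²(X)g³(X). -/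
/-- The golden ratio. -/
noncomputable def φ : ℝ := (1 + Real.sqrt 5) / 2

/-- The numerator of the first component of the icosahedral superflow's vector field. -/
noncomputable def A (x y z : ℝ) : ℝ :=
  (5 - Real.sqrt 5) * y * z ^ 5 + (5 + Real.sqrt 5) * y ^ 5 * z - 20 * y ^ 3 * z ^ 3
    + (10 + 10 * Real.sqrt 5) * x ^ 2 * y * z ^ 3 + (10 - 10 * Real.sqrt 5) * x ^ 2 * y ^ 3 * z
    - 10 * x ^ 4 * y * z

/-- `f_ξ(X) = 7φX³ − 7φ²X² − (11ξ + 2φ³)X − 7ξφ`. -/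
noncomputable def fpoly (ξ X : ℝ) : ℝ :=
  7 * φ * X ^ 3 - 7 * φ ^ 2 * X ^ 2 - (11 * ξ + 2 * φ ^ 3) * X - 7 * ξ * φ

/-- `g_ξ(X) = X³ − 2φX² + φ²X − 4ξ`. -/
noncomputable def gpoly (ξ X : ℝ) : ℝ :=
  X ^ 3 - 2 * φ * X ^ 2 + φ ^ 2 * X - 4 * ξ

/-- `h_ξ(X) = 2X³ − φX² + ξ`. -/
noncomputable def hpoly (ξ X : ℝ) : ℝ :=
  2 * X ^ 3 - φ * X ^ 2 + ξ

lemma phi_sq' : φ ^ 2 = φ + 1 := by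
  have h : Real.sqrt 5 ^ 2 = 5 := Real.sq_sqrt (by norm_num)
  unfold φ
  linear_combination h / 4

lemma sqrt_phi : Real.sqrt 5 = 2 * φ - 1 := by
  unfold φ
  ring

lemma superflow_deriv_id (w p q r : ℝ) (hw : w ^ 2 = w + 1) (s : ℝ) (hs : s = 2 * w - 1) :
    w ^ 2 * (2 * p * (-((5 - s) * q * r ^ 5 + (5 + s) * q ^ 5 * r - 20 * q ^ 3 * r ^ 3
    + (10 + 10 * s) * p ^ 2 * q * r ^ 3 + (10 - 10 * s) * p ^ 2 * q ^ 3 * r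
    - 10 * p ^ 4 * q * r))) - 2 * q * (-((5 - s) * r * p ^ 5 + (5 + s) * r ^ 5 * p
    - 20 * r ^ 3 * p ^ 3
    + (10 + 10 * s) * q ^ 2 * r * p ^ 3 + (10 - 10 * s) * q ^ 2 * r ^ 3 * p
    - 10 * q ^ 4 * r * p))
    = 2 * p * q * r * (24 - 8 * w) * ((w ^ 2 * p ^ 2 - q ^ 2)
      * ((w ^ 2 * q ^ 2 - r ^ 2) - (w ^ 2 * r ^ 2 - p ^ 2))) := by
  subst hs
  grind

lemma superflow_key_id (w a b c : ℝ) (hw : w ^ 2 = w + 1) (P Q R S : ℝ) (hP : P = (w + 1) * a - b)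
    (hQ : Q = (w + 1) * b - c) (hR : R = (w + 1) * c - a) (hS : S = P + Q + R) :
    4 * (24 - 8 * w) ^ 2 * (5 * w + 3) * (a * b * c)
     + 10 * (7 * P ^ 2 * S - 7 * P * S ^ 2 - 11 * P * Q * R - 2 * S ^ 3 - 7 * S * (Q * R))
     = 10 * (2 * w - 1) * ((P - Q) * (P - R) * (Q - R)) := by
  subst hS hP hQ hR
  grind

theorem stmt12 (ξ : ℝ) (I : Set ℝ) (hI : I.OrdConnected) (p q r : ℝ → ℝ)
    (hp : ∀ t ∈ I, HasDerivAt p (-(A (p t) (q t) (r t))) t)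
    (hq : ∀ t ∈ I, HasDerivAt q (-(A (q t) (r t) (p t))) t)
    (hr : ∀ t ∈ I, HasDerivAt r (-(A (r t) (p t) (q t))) t)
    (hsph : ∀ t ∈ I, (p t) ^ 2 + (q t) ^ 2 + (r t) ^ 2 = 1)
    (hxi : ∀ t ∈ I, (φ ^ 2 * (p t) ^ 2 - (q t) ^ 2) * (φ ^ 2 * (q t) ^ 2 - (r t) ^ 2)
        * (φ ^ 2 * (r t) ^ 2 - (p t) ^ 2) = ξ) :
    ∀ t ∈ I,
      let X := φ ^ 2 * (p t) ^ 2 - (q t) ^ 2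
      let Y := deriv (fun s => φ ^ 2 * (p s) ^ 2 - (q s) ^ 2) t
      X * (Y ^ 2 * φ ^ 5 + 10 * fpoly ξ X * gpoly ξ X) ^ 2
        = 500 * (hpoly ξ X) ^ 2 * (gpoly ξ X) ^ 3 := by
  intro t ht X Y
  have hw := phi_sq'
  have hY : Y = 2 * p t * q t * r t * (24 - 8 * φ) * (X
      * ((φ ^ 2 * q t ^ 2 - r t ^ 2) - (φ ^ 2 * r t ^ 2 - p t ^ 2))) := by
    have h1 := (((hp t ht).pow 2).const_mul (φ ^ 2)).sub ((hq t ht).pow 2)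
    have h2 : Y = _ := h1.deriv
    rw [h2, ← superflow_deriv_id φ (p t) (q t) (r t) hw _ sqrt_phi]
    simp only [A]
    push_cast
    ring
  have hs := hsph t ht
  have hx := hxi t ht
  have hPX : X = (φ + 1) * p t ^ 2 - q t ^ 2 := by rw [← hw]
  change X * _ * _ = ξ at hx
  rw [hw] at hY hx
  clear_value X Y
  obtain ⟨Q, hQ⟩ : ∃ Q, Q = (φ + 1) * q t ^ 2 - r t ^ 2 := ⟨_, rfl⟩
  obtain ⟨R, hR⟩ : ∃ R, R = (φ + 1) * r t ^ 2 - p t ^ 2 := ⟨_, rfl⟩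
  rw [← hQ, ← hR] at hY hx
  have hS : φ = X + Q + R := by
    rw [hPX, hQ, hR]; linear_combination -φ * hs
  have key := superflow_key_id φ (p t ^ 2) (q t ^ 2) (r t ^ 2) hw X Q R φ hPX hQ hR hS
  have h5 : φ ^ 5 = 5 * φ + 3 := by
    linear_combination (φ ^ 3 + φ ^ 2 + 2 * φ + 3) * hw
  have hg : gpoly ξ X = X * (Q - R) ^ 2 := by
    unfold gpoly
    have : Q = φ - X - R := by linarith
    subst hx; subst this; ring
  have hh : hpoly ξ X = X * (X - Q) * (X - R) := by
    unfold hpoly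
    have : Q = φ - X - R := by linarith
    subst hx; subst this; ring
  have hf : fpoly ξ X = X * (7 * X ^ 2 * φ - 7 * X * φ ^ 2 - 11 * X * Q * R - 2 * φ ^ 3
      - 7 * φ * (Q * R)) := by
    unfold fpoly
    subst hx; ring
  have hmain : Y ^ 2 * φ ^ 5 + 10 * fpoly ξ X * gpoly ξ X
      = X ^ 2 * (Q - R) ^ 2 * (10 * (2 * φ - 1) * ((X - Q) * (X - R) * (Q - R))) := by
    rw [← key, hf, hg, hY, h5]; ring
  rw [hmain, hh, hg]
  have h20 : (2 * φ - 1) ^ 2 = 5 := by linear_combination 4 * hw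
  linear_combination 100 * X ^ 5 * (Q - R) ^ 6 * ((X - Q) * (X - R)) ^ 2 * h20
end

section
/- Let φ = (1+√5)/2 and ξ ∈ ℝ. Define 𝔱(X) = 20X³ + 5φ²X² − 90φξX − 135ξ² − 20φ³ξ, g(X) = X³ − 2φX² + φ²X − 4ξ, and h(X) = 2X³ − φX² + ξ. Then for every real X ≠ 0: X⁹ · 4 · 𝔱((X³ − φX² − ξ)/X)³ = 500 · h(X)⁶ · g(X)³. -/
/-- `𝔱_ξ(X) = 20X³ + 5φ²X² − 90φξX − 135ξ² − 20φ³ξ`. -/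
noncomputable def tpoly (ξ X : ℝ) : ℝ :=
  20 * X ^ 3 + 5 * φ ^ 2 * X ^ 2 - 90 * φ * ξ * X - 135 * ξ ^ 2 - 20 * φ ^ 3 * ξ

/-- `X⁹·4·𝔱((X³ − φX² − ξ)/X)³ = 500·h(X)⁶·g(X)³`. -/
theorem stmt15 (ξ : ℝ) (X : ℝ) (hX : X ≠ 0) :
    X ^ 9 * 4 * (tpoly ξ ((X ^ 3 - φ * X ^ 2 - ξ) / X)) ^ 3
      = 500 * (hpoly ξ X) ^ 6 * (gpoly ξ X) ^ 3 := by
  have key : X ^ 3 * tpoly ξ ((X ^ 3 - φ * X ^ 2 - ξ) / X)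
      = 5 * (hpoly ξ X) ^ 2 * gpoly ξ X := by
    unfold tpoly hpoly gpoly
    field_simp
    ring
  calc X ^ 9 * 4 * (tpoly ξ ((X ^ 3 - φ * X ^ 2 - ξ) / X)) ^ 3
      = 4 * (X ^ 3 * tpoly ξ ((X ^ 3 - φ * X ^ 2 - ξ) / X)) ^ 3 := by ring
    _ = 500 * (hpoly ξ X) ^ 6 * (gpoly ξ X) ^ 3 := by rw [key]; ring
end

section
/- Let n ≥ 2. In ℝⁿ⁺¹ with coordinates (x₁, …, xₙ, x_{n+1}), define the quadratic forms Q_i(x) = x_i² − (2/(n−1))·x_i·∑_{1 ≤ j ≤ n, j ≠ i} x_j for 1 ≤ i ≤ n, and the vector field Q̂(x) = (Q₁(x), …, Qₙ(x), 0). Let Γ ⊂ GL(n+1, ℝ) be the subgroup generated by: (a) all permutation matrices permuting the coordinates x₁, …, xₙ and fixing x_{n+1}; (b) the matrix κ ⊕ (1), where κ is the n×n matrix sending (x₁, x₂, …, xₙ) to (−x₁, x₂ − x₁, …, xₙ − x₁); and (c) the matrix χ = diag(1, …, 1, −1). Then: (i) Q̂(γx) = γ·Q̂(x) for all γ ∈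 Γ and x ∈ ℝⁿ⁺¹; and (ii) if R: ℝⁿ⁺¹ → ℝⁿ⁺¹ is any map whose components are homogeneous quadratic forms and which satisfies R(γx) = γ·R(x) for all γ ∈ Γ and x ∈ ℝⁿ⁺¹, then R = c·Q̂ for some constant c ∈ ℝ. The group Γ is isomorphic to S_{n+1} ⊕ ℤ₂ and has order 2·(n+1)!. -/
open Matrix

/-- The vector field `Q̂(x) = (Q₁(x), …, Qₙ(x), 0)` on `ℝⁿ⁺¹`, where
`Q_i(x) = x_i² − (2/(n−1))·x_i·∑_{j ≤ n, j ≠ i} x_j`. -/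
noncomputable def Qhat (n : ℕ) (x : Fin (n + 1) → ℝ) : Fin (n + 1) → ℝ := fun i =>
  if h : (i : ℕ) < n then
    (x i) ^ 2 - (2 / ((n : ℝ) - 1)) * x i *
      (∑ j : Fin n, if (Fin.castSucc j : Fin (n + 1)) = i then 0 else x (Fin.castSucc j))
  else 0

/-- The permutation matrix permuting the coordinates `x₁, …, xₙ` according to `σ` and
fixing `x_{n+1}`. -/
noncomputable def permMat (n : ℕ) (σ : Equiv.Perm (Fin n)) :
    Matrix (Fin (n + 1)) (Fin (n + 1)) ℝ := fun i j =>
  if h : (i : ℕ) < n then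
    (if j = Fin.castSucc (σ ⟨(i : ℕ), h⟩) then 1 else 0)
  else (if j = i then 1 else 0)

/-- The matrix `κ ⊕ (1)` where `κ` sends `(x₁, x₂, …, xₙ)` to
`(−x₁, x₂ − x₁, …, xₙ − x₁)`, and the last coordinate is fixed. -/
noncomputable def kapMat (n : ℕ) : Matrix (Fin (n + 1)) (Fin (n + 1)) ℝ := fun i j =>
  if (i : ℕ) < n then
    (if (i : ℕ) = 0 then (if (j : ℕ) = 0 then -1 else 0)
     else (if j = i then 1 else if (j : ℕ) = 0 then -1 else 0))
  else (if j = i then 1 else 0)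

/-- The matrix `χ = diag(1, …, 1, −1)`. -/
noncomputable def chiMat (n : ℕ) : Matrix (Fin (n + 1)) (Fin (n + 1)) ℝ :=
  Matrix.diagonal (fun i => if (i : ℕ) = n then -1 else 1)

/-- The set of generating matrices: permutation matrices of `x₁, …, xₙ`, the matrix
`κ ⊕ (1)`, and `χ`. -/
noncomputable def genSet (n : ℕ) : Set (Matrix (Fin (n + 1)) (Fin (n + 1)) ℝ) :=
  {M | (∃ σ : Equiv.Perm (Fin n), M = permMat n σ) ∨ M = kapMat n ∨ M = chiMat n}

/-- The subgroup `Γ ⊂ GL(n+1, ℝ)` generated by the above matrices. -/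
noncomputable def Γgrp (n : ℕ) : Subgroup (GL (Fin (n + 1)) ℝ) :=
  Subgroup.closure {g : GL (Fin (n + 1)) ℝ |
    (g : Matrix (Fin (n + 1)) (Fin (n + 1)) ℝ) ∈ genSet n}


/-- Replace the last coordinate by zero. -/
noncomputable def zz (n : ℕ) (x : Fin (n + 1) → ℝ) : Fin (n + 1) → ℝ := fun i =>
  if i = Fin.last n then 0 else x i

lemma zz_last (n : ℕ) (x : Fin (n + 1) → ℝ) : zz n x (Fin.last n) = 0 := by simp [zz]

lemma zz_ne {n : ℕ} (x : Fin (n + 1) → ℝ) {i : Fin (n + 1)} (h : i ≠ Fin.last n) :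
    zz n x i = x i := by simp [zz, h]

/-- The action of `S_{n+1} × ℤˣ` on `ℝⁿ⁺¹`. -/
noncomputable def act (n : ℕ) (σ : Equiv.Perm (Fin (n + 1))) (s : ℤˣ)
    (x : Fin (n + 1) → ℝ) : Fin (n + 1) → ℝ := fun i =>
  if i = Fin.last n then ((s : ℤ) : ℝ) * x i
  else zz n x (σ⁻¹ i) - zz n x (σ⁻¹ (Fin.last n))

lemma zz_act (n : ℕ) (σ : Equiv.Perm (Fin (n + 1))) (s : ℤˣ) (x : Fin (n + 1) → ℝ)
    (i : Fin (n + 1)) :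
    zz n (act n σ s x) i = zz n x (σ⁻¹ i) - zz n x (σ⁻¹ (Fin.last n)) := by
  by_cases h : i = Fin.last n
  · subst h; simp [zz_last]
  · rw [zz_ne _ h]; simp only [act, if_neg h]

lemma act_last (n : ℕ) (σ : Equiv.Perm (Fin (n + 1))) (s : ℤˣ) (x : Fin (n + 1) → ℝ) :
    act n σ s x (Fin.last n) = ((s : ℤ) : ℝ) * x (Fin.last n) := by simp [act]

lemma act_ne {n : ℕ} (σ : Equiv.Perm (Fin (n + 1))) (s : ℤˣ) (x : Fin (n + 1) → ℝ)
    {i : Fin (n + 1)} (h : i ≠ Fin.last n) :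
    act n σ s x i = zz n x (σ⁻¹ i) - zz n x (σ⁻¹ (Fin.last n)) := by simp only [act, if_neg h]

lemma act_mul (n : ℕ) (σ τ : Equiv.Perm (Fin (n + 1))) (s t : ℤˣ) (x : Fin (n + 1) → ℝ) :
    act n (σ * τ) (s * t) x = act n σ s (act n τ t x) := by
  funext i
  by_cases h : i = Fin.last n
  · subst h; simp only [act_last]; push_cast; ring
  · rw [act_ne _ _ _ h, act_ne _ _ _ h, zz_act, zz_act]
    simp [_root_.mul_inv_rev, Equiv.Perm.mul_apply]

lemma act_one (n : ℕ) (x : Fin (n + 1) → ℝ) : act n 1 1 x = x := by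
  funext i
  by_cases h : i = Fin.last n
  · subst h; simp [act_last]
  · rw [act_ne _ _ _ h]; simp [zz_last, zz_ne _ h]

/-- The action as a linear map. -/
noncomputable def actLin (n : ℕ) (g : Equiv.Perm (Fin (n + 1)) × ℤˣ) :
    (Fin (n + 1) → ℝ) →ₗ[ℝ] (Fin (n + 1) → ℝ) where
  toFun := act n g.1 g.2
  map_add' x y := by
    funext i
    simp only [act, zz, Pi.add_apply]
    split_ifs <;> ring
  map_smul' c x := by
    funext i
    simp only [act, zz, Pi.smul_apply, smul_eq_mul, RingHom.id_apply]
    split_ifs <;> ring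

/-- The representation. -/
noncomputable def rhoMat (n : ℕ) :
    Equiv.Perm (Fin (n + 1)) × ℤˣ →* Matrix (Fin (n + 1)) (Fin (n + 1)) ℝ where
  toFun g := LinearMap.toMatrix' (actLin n g)
  map_one' := by
    rw [← LinearMap.toMatrix'_one]
    congr 1
    ext1 x
    exact LinearMap.ext fun y => by simp [actLin, act_one]
  map_mul' g h := by
    rw [← LinearMap.toMatrix'_mul]
    congr 1
    exact LinearMap.ext fun y => act_mul n g.1 h.1 g.2 h.2 y

/-- The representation into `GL`. -/
noncomputable def rho (n : ℕ) :
    Equiv.Perm (Fin (n + 1)) × ℤˣ →* GL (Fin (n + 1)) ℝ := (rhoMat n).toHomUnits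

lemma rho_mulVec (n : ℕ) (g : Equiv.Perm (Fin (n + 1)) × ℤˣ) (x : Fin (n + 1) → ℝ) :
    ((rho n g : GL (Fin (n + 1)) ℝ) : Matrix (Fin (n + 1)) (Fin (n + 1)) ℝ).mulVec x
      = act n g.1 g.2 x := by
  change (LinearMap.toMatrix' (actLin n g)).mulVec x = _
  rw [LinearMap.toMatrix'_mulVec]
  rfl

lemma rho_eq_of_mulVec (n : ℕ) (g : Equiv.Perm (Fin (n + 1)) × ℤˣ)
    (M : Matrix (Fin (n + 1)) (Fin (n + 1)) ℝ)
    (h : ∀ x, M.mulVec x = act n g.1 g.2 x) :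
    ((rho n g : GL (Fin (n + 1)) ℝ) : Matrix (Fin (n + 1)) (Fin (n + 1)) ℝ) = M := by
  apply Matrix.mulVec_injective
  funext x
  rw [rho_mulVec]
  exact (h x).symm

lemma rho_injective (n : ℕ) : Function.Injective (rho n) := by
  rw [injective_iff_map_eq_one]
  rintro ⟨σ, s⟩ h
  have key : ∀ x, act n σ s x = x := by
    intro x
    have := rho_mulVec n (σ, s) x
    rw [h] at this
    simpa using this.symm
  have hs : s = 1 := by
    have := congrFun (key (fun _ => 1)) (Fin.last n)
    rw [act_last] at this
    have h2 : ((s : ℤ) : ℝ) = 1 := by simpa using this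
    have h3 : (s : ℤ) = 1 := by exact_mod_cast h2
    exact Units.ext h3
  have hσ : σ⁻¹ = 1 := by
    set x : Fin (n + 1) → ℝ := fun i => (i : ℕ) + 1
    have hy : ∀ i, zz n x (σ⁻¹ i) - zz n x (σ⁻¹ (Fin.last n)) = zz n x i := by
      intro i
      rw [← zz_act n σ s, key]
    have hsum : ∑ i, zz n x (σ⁻¹ i) = ∑ i, zz n x i := Equiv.sum_comp σ⁻¹ (zz n x)
    have hc : zz n x (σ⁻¹ (Fin.last n)) = 0 := by
      have := Finset.sum_congr rfl (fun i (_ : i ∈ Finset.univ) => hy i)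
      rw [Finset.sum_sub_distrib, hsum] at this
      simp only [Finset.sum_const, Finset.card_univ, Fintype.card_fin, nsmul_eq_mul] at this
      have h0 : ((n + 1 : ℕ) : ℝ) ≠ 0 := by positivity
      have h1 : ((n + 1 : ℕ) : ℝ) * zz n x (σ⁻¹ (Fin.last n)) = 0 := by linarith
      exact (mul_eq_zero.mp h1).resolve_left h0
    ext i : 1
    have hi := hy i
    rw [hc, sub_zero] at hi
    have pos : ∀ j : Fin (n + 1), x j ≠ 0 := fun j => by positivity
    simp only [Equiv.Perm.one_apply]
    simp only [zz] at hi
    split_ifs at hi with h1 h2 h2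
    · rw [h1, h2]
    · exact absurd hi.symm (pos _)
    · exact absurd hi (pos _)
    · simp only [x] at hi
      have : ((σ⁻¹ i : Fin (n + 1)) : ℕ) = (i : ℕ) := by
        exact_mod_cast (add_right_cancel hi)
      exact Fin.ext this
  have : σ = 1 := by simpa using hσ
  rw [this, hs]; rfl

/-- Extension of a permutation by fixing the last point. -/
def extPerm (n : ℕ) (τ : Equiv.Perm (Fin n)) : Equiv.Perm (Fin (n + 1)) where
  toFun := Fin.lastCases (Fin.last n) (fun i => Fin.castSucc (τ i))
  invFun := Fin.lastCases (Fin.last n) (fun i => Fin.castSucc (τ.symm i))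
  left_inv i := by
    refine Fin.lastCases ?_ (fun i => ?_) i <;> simp
  right_inv i := by
    refine Fin.lastCases ?_ (fun i => ?_) i <;> simp

lemma extPerm_castSucc (n : ℕ) (τ : Equiv.Perm (Fin n)) (i : Fin n) :
    extPerm n τ (Fin.castSucc i) = Fin.castSucc (τ i) := by simp [extPerm]

lemma extPerm_last (n : ℕ) (τ : Equiv.Perm (Fin n)) :
    extPerm n τ (Fin.last n) = Fin.last n := by simp [extPerm]

lemma permMat_mulVec (n : ℕ) (τ : Equiv.Perm (Fin n)) (x : Fin (n + 1) → ℝ) :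
    (permMat n τ).mulVec x = act n (extPerm n τ)⁻¹ 1 x := by
  funext i
  refine Fin.lastCases ?_ (fun i => ?_) i
  · simp [act_last, permMat, Matrix.mulVec, dotProduct]
  · rw [act_ne _ _ _ (Fin.castSucc_lt_last i).ne, inv_inv, extPerm_castSucc, extPerm_last, zz_last,
      zz_ne _ (Fin.castSucc_lt_last _).ne]
    simp [permMat, Matrix.mulVec, dotProduct]

lemma chiMat_mulVec (n : ℕ) (x : Fin (n + 1) → ℝ) :
    (chiMat n).mulVec x = act n 1 (-1) x := by
  funext i
  refine Fin.lastCases ?_ (fun i => ?_) i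
  · simp [act_last, chiMat, Matrix.mulVec_diagonal]
  · rw [act_ne _ _ _ (Fin.castSucc_lt_last i).ne]
    simp [chiMat, Matrix.mulVec_diagonal, zz_last, zz_ne _ (Fin.castSucc_lt_last i).ne, i.2.ne]

lemma kapMat_mulVec (n : ℕ) (hn : 2 ≤ n) (x : Fin (n + 1) → ℝ) :
    (kapMat n).mulVec x = act n (Equiv.swap 0 (Fin.last n)) 1 x := by
  have h0 : (0 : Fin (n + 1)) ≠ Fin.last n := by
    intro h; have := congrArg Fin.val h; simp at this; omega
  funext i
  refine Fin.lastCases ?_ (fun i => ?_) i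
  · simp [act_last, kapMat, Matrix.mulVec, dotProduct]
  · have hl := (Fin.castSucc_lt_last i).ne
    rw [act_ne _ _ _ hl, Equiv.swap_inv, Equiv.swap_apply_right, zz_ne _ h0]
    by_cases hi : (i : ℕ) = 0
    · have hi' : Fin.castSucc i = 0 := Fin.ext hi
      rw [hi', Equiv.swap_apply_left, zz_last]
      simp only [kapMat, Matrix.mulVec, dotProduct]
      rw [Finset.sum_eq_single 0]
      · simp; omega
      · intro b _ hb
        have : (b : ℕ) ≠ 0 := fun h => hb (Fin.ext h)
        simp [this]; omega
      · simp
    · have hi' : Fin.castSucc i ≠ 0 := fun h => hi (by simpa using congrArg Fin.val h)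
      rw [Equiv.swap_apply_of_ne_of_ne hi' hl, zz_ne _ hl]
      have hrow : ∀ j, kapMat n (Fin.castSucc i) j * x j
          = (if j = Fin.castSucc i then x j else 0) - (if j = 0 then x j else 0) := by
        intro j
        have hj : (j : ℕ) = 0 ↔ j = 0 := by rw [Fin.ext_iff]; simp
        simp only [kapMat, Fin.val_castSucc, i.2, if_true, hi, if_false, hj]
        by_cases h1 : j = Fin.castSucc i
        · subst h1; simp [hi']
        · by_cases h2 : j = 0 <;> simp [h1, h2, hi'.symm]
      simp only [Matrix.mulVec, dotProduct, hrow, Finset.sum_sub_distrib]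
      simp

lemma rho_range (n : ℕ) (hn : 2 ≤ n) : (rho n).range = Γgrp n := by
  apply le_antisymm
  · have hp : ∀ τ : Equiv.Perm (Fin n), rho n ((extPerm n τ)⁻¹, 1) ∈ Γgrp n := fun τ =>
      Subgroup.subset_closure (Or.inl ⟨τ, rho_eq_of_mulVec n _ _ (permMat_mulVec n τ)⟩)
    have hk : rho n (Equiv.swap 0 (Fin.last n), 1) ∈ Γgrp n :=
      Subgroup.subset_closure (Or.inr (Or.inl (rho_eq_of_mulVec n _ _ (kapMat_mulVec n hn))))
    have hc : rho n (1, -1) ∈ Γgrp n :=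
      Subgroup.subset_closure (Or.inr (Or.inr (rho_eq_of_mulVec n _ _ (chiMat_mulVec n))))
    have hs1 : ∀ a b : Fin n, rho n (Equiv.swap (Fin.castSucc a) (Fin.castSucc b), 1) ∈ Γgrp n := by
      intro a b
      convert hp (Equiv.swap a b)
      rw [eq_inv_iff_mul_eq_one]
      ext i : 1
      simp only [Equiv.Perm.mul_apply, Equiv.Perm.one_apply]
      refine Fin.lastCases ?_ (fun i => ?_) i
      · rw [extPerm_last, Equiv.swap_apply_of_ne_of_ne (Fin.castSucc_lt_last _).ne'
          (Fin.castSucc_lt_last _).ne']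
      · rw [extPerm_castSucc, ← (Fin.castSucc_injective n).map_swap, Equiv.swap_apply_self]
    have h0 : (0 : Fin (n + 1)) ≠ Fin.last n := by
      intro h; have := congrArg Fin.val h; simp at this; omega
    have hs2 : ∀ a : Fin n, rho n (Equiv.swap (Fin.castSucc a) (Fin.last n), 1) ∈ Γgrp n := by
      intro a
      by_cases ha : Fin.castSucc a = 0
      · rw [ha]; exact hk
      · have h1 := hs1 a ⟨0, by omega⟩
        have e0 : Fin.castSucc (⟨0, by omega⟩ : Fin n) = 0 := rfl
        rw [e0] at h1
        have h2 := mul_mem (mul_mem h1 hk) h1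
        rw [← map_mul, ← map_mul] at h2
        convert h2 using 2
        rw [Prod.mk_mul_mk, Prod.mk_mul_mk]
        congr 1
        change _ = Equiv.swap (Fin.castSucc a) 0 * Equiv.swap 0 (Fin.last n)
          * Equiv.swap (Fin.castSucc a) 0
        rw [Equiv.swap_comm (Fin.castSucc a) 0, Equiv.swap_comm 0 (Fin.last n),
          Equiv.swap_mul_swap_mul_swap h0.symm (Fin.castSucc_lt_last a).ne']
    have hs : ∀ a b : Fin (n + 1), rho n (Equiv.swap a b, 1) ∈ Γgrp n := by
      intro a b
      refine Fin.lastCases ?_ (fun a => ?_) a <;> refine Fin.lastCases ?_ (fun b => ?_) b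
      · rw [Equiv.swap_self]; exact (map_one (rho n)) ▸ one_mem _
      · rw [Equiv.swap_comm]; exact hs2 b
      · exact hs2 a
      · exact hs1 a b
    have hσ : ∀ σ : Equiv.Perm (Fin (n + 1)), rho n (σ, 1) ∈ Γgrp n := by
      intro σ
      induction σ using Equiv.Perm.swap_induction_on with
      | one => exact (map_one (rho n)) ▸ one_mem _
      | swap_mul f x y _ ih =>
        have := mul_mem (hs x y) ih
        rw [← map_mul] at this
        exact this
    rintro _ ⟨⟨σ, s⟩, rfl⟩
    rcases Int.units_eq_one_or s with rfl | rfl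
    · exact hσ σ
    · have := mul_mem (hσ σ) hc
      rw [← map_mul, Prod.mk_mul_mk, mul_one, one_mul] at this
      exact this
  · unfold Γgrp
    rw [Subgroup.closure_le]
    rintro g (⟨τ, h⟩ | h | h)
    · exact ⟨((extPerm n τ)⁻¹, 1), Units.ext ((rho_eq_of_mulVec n _ _ (permMat_mulVec n τ)).trans
        h.symm)⟩
    · exact ⟨_, Units.ext ((rho_eq_of_mulVec n (Equiv.swap 0 (Fin.last n), 1) _
        (kapMat_mulVec n hn)).trans h.symm)⟩
    · exact ⟨_, Units.ext ((rho_eq_of_mulVec n (1, -1) _ (chiMat_mulVec n)).trans h.symm)⟩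

lemma Qhat_eq (n : ℕ) (hn : 2 ≤ n) (x : Fin (n + 1) → ℝ) (i : Fin (n + 1)) :
    Qhat n x i = zz n x i * ((n + 1) * zz n x i - 2 * ∑ j, zz n x j) / ((n : ℝ) - 1) := by
  have hn1 : (n : ℝ) - 1 ≠ 0 := by
    have : (2 : ℝ) ≤ n := by exact_mod_cast hn
    linarith
  refine Fin.lastCases ?_ (fun i => ?_) i
  · simp [Qhat, zz_last]
  · have hs : ∑ j, zz n x j = ∑ j : Fin n, x (Fin.castSucc j) := by
      rw [Fin.sum_univ_castSucc, zz_last, add_zero]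
      exact Finset.sum_congr rfl fun j _ => zz_ne _ (Fin.castSucc_lt_last j).ne
    have hs2 : (∑ j : Fin n, if (Fin.castSucc j : Fin (n + 1)) = Fin.castSucc i then 0
        else x (Fin.castSucc j)) = ∑ j : Fin n, x (Fin.castSucc j) - x (Fin.castSucc i) := by
      rw [eq_sub_iff_add_eq]
      have : x (Fin.castSucc i) = ∑ j : Fin n, if j = i then x (Fin.castSucc j) else 0 := by simp
      rw [this, ← Finset.sum_add_distrib]
      refine Finset.sum_congr rfl fun j _ => ?_
      by_cases h : j = i <;> simp [h]
    rw [hs, zz_ne _ (Fin.castSucc_lt_last i).ne]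
    simp only [Qhat, Fin.val_castSucc, i.2, dif_pos]
    rw [hs2]
    field_simp
    ring

lemma Qhat_last (n : ℕ) (x : Fin (n + 1) → ℝ) : Qhat n x (Fin.last n) = 0 := by simp [Qhat]

lemma zz_Qhat (n : ℕ) (x : Fin (n + 1) → ℝ) : zz n (Qhat n x) = Qhat n x := by
  funext i
  by_cases h : i = Fin.last n
  · subst h; rw [zz_last, Qhat_last]
  · rw [zz_ne _ h]

lemma Qhat_act (n : ℕ) (hn : 2 ≤ n) (σ : Equiv.Perm (Fin (n + 1))) (s : ℤˣ)
    (x : Fin (n + 1) → ℝ) : Qhat n (act n σ s x) = act n σ s (Qhat n x) := by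
  funext i
  by_cases h : i = Fin.last n
  · subst h; simp [act_last, Qhat_last]
  · rw [act_ne _ _ _ h, zz_Qhat, Qhat_eq n hn, Qhat_eq n hn, Qhat_eq n hn]
    have hsum : ∑ j, zz n (act n σ s x) j
        = ∑ j, zz n x j - (n + 1) * zz n x (σ⁻¹ (Fin.last n)) := by
      simp only [zz_act, Finset.sum_sub_distrib]
      rw [Equiv.sum_comp σ⁻¹ (zz n x)]
      simp
    rw [hsum, zz_act]
    ring

/-- A quadratic form vanishing on a coordinate hyperplane is divisible by the coordinate. -/
lemma quad_factor {m : ℕ} (q : (Fin m → ℝ) → ℝ) (B : Matrix (Fin m) (Fin m) ℝ)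
    (hq : ∀ x, q x = ∑ j, ∑ k, B j k * x j * x k) (p : Fin m)
    (h0 : ∀ x, x p = 0 → q x = 0) :
    ∃ l : Fin m → ℝ, ∀ x, q x = x p * ∑ j, l j * x j := by
  refine ⟨fun j => if j = p then B p p else B p j + B j p, fun x => ?_⟩
  have h := h0 (Function.update x p 0) (by simp)
  rw [hq] at h
  rw [hq]
  have e1 : ∀ f : Fin m → ℝ, ∑ j, f j = f p + ∑ j ∈ Finset.univ.erase p, f j := fun f =>
    (Finset.add_sum_erase _ _ (Finset.mem_univ p)).symm
  have e2 : ∑ j ∈ Finset.univ.erase p, ∑ k ∈ Finset.univ.erase p, B j k * x j * x k = 0 := by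
    rw [e1] at h
    simp only [Function.update_self, mul_zero, zero_mul, Finset.sum_const_zero, zero_add] at h
    rw [← h]
    refine Finset.sum_congr rfl fun j hj => ?_
    rw [e1]
    simp only [Function.update_self, mul_zero, zero_add]
    refine Finset.sum_congr rfl fun k hk => ?_
    rw [Function.update_of_ne (Finset.ne_of_mem_erase hj),
      Function.update_of_ne (Finset.ne_of_mem_erase hk)]
  rw [e1, e1 (fun k => B p k * x p * x k), e1 (fun j => _ * x j)]
  have e3 : ∑ j ∈ Finset.univ.erase p, ∑ k, B j k * x j * x k
      = ∑ j ∈ Finset.univ.erase p, B j p * x j * x p := by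
    rw [← add_zero (∑ j ∈ Finset.univ.erase p, B j p * x j * x p), ← e2,
      ← Finset.sum_add_distrib]
    exact Finset.sum_congr rfl fun j _ => e1 _
  rw [e3, add_assoc, ← Finset.sum_add_distrib, mul_add, Finset.mul_sum]
  congr 1
  · simp; ring
  · refine Finset.sum_congr rfl fun j hj => ?_
    rw [if_neg (Finset.ne_of_mem_erase hj)]
    ring

lemma exists_other (n : ℕ) (hn : 2 ≤ n) (p : Fin (n + 1)) :
    ∃ j : Fin (n + 1), j ≠ p ∧ j ≠ Fin.last n := by
  by_cases h : (p : ℕ) = 0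
  · refine ⟨⟨1, by omega⟩, ?_, ?_⟩ <;> simp only [ne_eq, Fin.ext_iff, Fin.val_last] <;> omega
  · refine ⟨⟨0, by omega⟩, ?_, ?_⟩ <;> simp only [ne_eq, Fin.ext_iff, Fin.val_last] <;> omega

lemma act_swap_single (n : ℕ) {j k : Fin (n + 1)} (hj : j ≠ Fin.last n) (hk : k ≠ Fin.last n)
    (x : Fin (n + 1) → ℝ) (i : Fin (n + 1)) :
    act n (Equiv.swap j k) 1 x i = x (Equiv.swap j k i) := by
  have hl : Equiv.swap j k (Fin.last n) = Fin.last n :=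
    Equiv.swap_apply_of_ne_of_ne hj.symm hk.symm
  by_cases h : i = Fin.last n
  · subst h; rw [act_last, hl]; simp
  · rw [act_ne _ _ _ h, Equiv.swap_inv, hl, zz_last, sub_zero, zz_ne]
    intro h'
    apply h
    have := congrArg (Equiv.swap j k) h'
    rwa [Equiv.swap_apply_self, hl] at this

lemma act_neg (n : ℕ) (x : Fin (n + 1) → ℝ) (i : Fin (n + 1)) :
    act n 1 (-1) x i = if i = Fin.last n then - x i else x i := by
  by_cases h : i = Fin.last n
  · subst h; simp [act_last]
  · rw [act_ne _ _ _ h]; simp [zz_last, zz_ne _ h, h]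

/-- Linear form with prescribed coefficients. -/
lemma linear_sum (n : ℕ) (l : Fin (n + 1) → ℝ) {p : Fin (n + 1)} (hp : p ≠ Fin.last n) (b : ℝ)
    (hl : l (Fin.last n) = 0) (hb : ∀ j, j ≠ p → j ≠ Fin.last n → l j = b)
    (x : Fin (n + 1) → ℝ) :
    ∑ j, l j * x j = b * (∑ j, zz n x j) + (l p - b) * x p := by
  have : ∀ j, l j * x j = b * zz n x j + if j = p then (l p - b) * x j else 0 := by
    intro j
    by_cases h1 : j = Fin.last n
    · subst h1; simp [hl, zz_last, hp.symm]
    · by_cases h2 : j = p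
      · subst h2; simp [zz_ne _ h1]; ring
      · simp [h2, zz_ne _ h1, hb j h2 h1]
  simp only [this, Finset.sum_add_distrib, Finset.mul_sum]
  simp

lemma uniq_ne (n : ℕ) (hn : 2 ≤ n) (R : (Fin (n + 1) → ℝ) → (Fin (n + 1) → ℝ))
  (hR : ∀ i : Fin (n + 1), ∃ B : Matrix (Fin (n + 1)) (Fin (n + 1)) ℝ,
        ∀ x : Fin (n + 1) → ℝ, R x i = ∑ j, ∑ k, B j k * x j * x k)
  (hE : ∀ σ s x, R (act n σ s x) = act n σ s (R x))
    (p : Fin (n + 1)) (hp : p ≠ Fin.last n) :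
    ∃ c : ℝ, ∀ x, R x p = c * Qhat n x p := by
  have hn1 : (n : ℝ) - 1 ≠ 0 := by
    have : (2 : ℝ) ≤ n := by exact_mod_cast hn
    linarith
  have hanti : ∀ x, R (act n (Equiv.swap p (Fin.last n)) 1 x) p = - R x p := by
    intro x
    rw [hE, act_ne _ _ _ hp]
    simp [zz_last, zz_ne _ hp]
  have h0 : ∀ x, x p = 0 → R x p = 0 := by
    intro x hx
    have hfix : act n (Equiv.swap p (Fin.last n)) 1 x = x := by
      funext i
      by_cases h : i = Fin.last n
      · subst h; simp [act_last]
      · rw [act_ne _ _ _ h, Equiv.swap_inv, Equiv.swap_apply_right, zz_ne _ hp, hx, sub_zero]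
        by_cases h2 : i = p
        · subst h2; simp [zz_last, hx]
        · rw [Equiv.swap_apply_of_ne_of_ne h2 h, zz_ne _ h]
    have := hanti x
    rw [hfix] at this
    linarith
  obtain ⟨B, hB⟩ := hR p
  obtain ⟨l, hl⟩ := quad_factor (fun x => R x p) B hB p h0
  have hval : ∀ j, j ≠ p → R (Pi.single p 1 + Pi.single j 1) p = l p + l j := by
    intro j hj
    rw [hl]
    simp [mul_add, Finset.sum_add_distrib, Pi.single_apply, hj.symm]
  have hlast : l (Fin.last n) = 0 := by
    have e := congrFun (hE 1 (-1) (Pi.single p 1 + Pi.single (Fin.last n) 1)) p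
    rw [act_neg, if_neg hp, hval _ hp.symm] at e
    have : act n 1 (-1) (Pi.single p 1 + Pi.single (Fin.last n) 1)
        = Pi.single p 1 - Pi.single (Fin.last n) 1 := by
      funext i
      rw [act_neg]
      by_cases h : i = Fin.last n
      · subst h; simp [hp.symm]
      · simp [h]
    rw [this, hl] at e
    simp [mul_sub, Finset.sum_sub_distrib, Pi.single_apply, hp] at e
    linarith
  obtain ⟨k, hkp, hkl⟩ := exists_other n hn p
  have hb : ∀ j, j ≠ p → j ≠ Fin.last n → l j = l k := by
    intro j hjp hjl
    have e := congrFun (hE (Equiv.swap j k) 1 (Pi.single p 1 + Pi.single k 1)) p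
    rw [act_swap_single n hjl hkl, Equiv.swap_apply_of_ne_of_ne hjp.symm hkp.symm, hval _ hkp] at e
    have : act n (Equiv.swap j k) 1 (Pi.single p 1 + Pi.single k 1)
        = Pi.single p 1 + Pi.single j 1 := by
      funext i
      rw [act_swap_single n hjl hkl]
      simp only [Pi.add_apply, Pi.single_apply]
      congr 2
      · rw [Equiv.swap_apply_eq_iff, Equiv.swap_apply_of_ne_of_ne hjp.symm hkp.symm]
      · rw [Equiv.swap_apply_eq_iff, Equiv.swap_apply_right]
    rw [this, hval _ hjp] at e
    linarith
  have hform : ∀ x, R x p = x p * (l k * (∑ j, zz n x j) + (l p - l k) * x p) := by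
    intro x
    rw [hl, linear_sum n l hp (l k) hlast hb]
  have hrel : 2 * l p + (n - 1) * l k = 0 := by
    have e := hanti (Pi.single p 1)
    rw [hform, hform] at e
    have s1 : ∑ j, zz n (act n (Equiv.swap p (Fin.last n)) 1 (Pi.single p 1)) j = - n := by
      simp only [zz_act, Finset.sum_sub_distrib]
      rw [Equiv.sum_comp (Equiv.swap p (Fin.last n))⁻¹ (zz n (Pi.single p 1))]
      have : zz n (Pi.single p 1) = Pi.single p 1 := by
        funext i
        by_cases h : i = Fin.last n
        · subst h; simp [zz_last, hp.symm]
        · rw [zz_ne _ h]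
      simp [this]
    have s2 : ∑ j, zz n (Pi.single p 1) j = 1 := by
      have : zz n (Pi.single p 1) = Pi.single p 1 := by
        funext i
        by_cases h : i = Fin.last n
        · subst h; simp [zz_last, hp.symm]
        · rw [zz_ne _ h]
      simp [this]
    rw [s1, s2, act_ne _ _ _ hp] at e
    simp [zz_last, zz_ne _ hp] at e
    linarith
  refine ⟨l p, fun x => ?_⟩
  rw [hform, Qhat_eq n hn, zz_ne _ hp]
  have hk : l k = - 2 * l p / (n - 1) := by
    rw [eq_div_iff hn1]; linarith
  rw [hk]
  field_simp
  ring

lemma uniq_last (n : ℕ) (hn : 2 ≤ n) (R : (Fin (n + 1) → ℝ) → (Fin (n + 1) → ℝ))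
  (hR : ∀ i : Fin (n + 1), ∃ B : Matrix (Fin (n + 1)) (Fin (n + 1)) ℝ,
        ∀ x : Fin (n + 1) → ℝ, R x i = ∑ j, ∑ k, B j k * x j * x k)
  (hE : ∀ σ s x, R (act n σ s x) = act n σ s (R x))
    (x : Fin (n + 1) → ℝ) : R x (Fin.last n) = 0 := by
  have hanti : ∀ x, R (act n 1 (-1) x) (Fin.last n) = - R x (Fin.last n) := by
    intro x
    rw [hE, act_neg, if_pos rfl]
  have h0 : ∀ x, x (Fin.last n) = 0 → R x (Fin.last n) = 0 := by
    intro x hx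
    have hfix : act n 1 (-1) x = x := by
      funext i
      rw [act_neg]
      by_cases h : i = Fin.last n
      · subst h; simp [hx]
      · simp [h]
    have := hanti x
    rw [hfix] at this
    linarith
  obtain ⟨B, hB⟩ := hR (Fin.last n)
  obtain ⟨l, hl⟩ := quad_factor (fun x => R x (Fin.last n)) B hB (Fin.last n) h0
  have hinv : ∀ σ x, R (act n σ 1 x) (Fin.last n) = R x (Fin.last n) := by
    intro σ x
    rw [hE, act_last]; simp
  have hlast : l (Fin.last n) = 0 := by
    have e := hanti (Pi.single (Fin.last n) 1)
    have : act n 1 (-1) (Pi.single (Fin.last n) 1) = - Pi.single (Fin.last n) 1 := by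
      funext i
      rw [act_neg]
      by_cases h : i = Fin.last n
      · subst h; simp
      · simp [h]
    rw [this, hl, hl] at e
    simp [Pi.single_apply] at e
    linarith
  have hval : ∀ j, j ≠ Fin.last n →
      R (Pi.single (Fin.last n) 1 + Pi.single j 1) (Fin.last n) = l j := by
    intro j hj
    rw [hl]
    simp [mul_add, Finset.sum_add_distrib, Pi.single_apply, hj.symm, hlast]
  obtain ⟨k, -, hkl⟩ := exists_other n hn (Fin.last n)
  have hb : ∀ j, j ≠ Fin.last n → l j = l k := by
    intro j hjl
    have e := hinv (Equiv.swap j k) (Pi.single (Fin.last n) 1 + Pi.single k 1)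
    have : act n (Equiv.swap j k) 1 (Pi.single (Fin.last n) 1 + Pi.single k 1)
        = Pi.single (Fin.last n) 1 + Pi.single j 1 := by
      funext i
      rw [act_swap_single n hjl hkl]
      simp only [Pi.add_apply, Pi.single_apply]
      congr 2
      · rw [Equiv.swap_apply_eq_iff, Equiv.swap_apply_of_ne_of_ne hjl.symm hkl.symm]
      · rw [Equiv.swap_apply_eq_iff, Equiv.swap_apply_right]
    rw [this, hval _ hjl, hval _ hkl] at e
    exact e
  have hform : ∀ x, R x (Fin.last n) = x (Fin.last n) * (l k * (∑ j, zz n x j)) := by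
    intro x
    rw [hl, linear_sum n l hkl (l k) hlast (fun j _ h => hb j h)]
    ring
  have hk : l k = 0 := by
    have e := hinv (Equiv.swap k (Fin.last n)) (Pi.single (Fin.last n) 1 + Pi.single k 1)
    rw [hform, hform, act_last] at e
    have hz : zz n (Pi.single (Fin.last n) 1 + Pi.single k 1) = Pi.single k 1 := by
      funext i
      by_cases h : i = Fin.last n
      · subst h; simp [zz_last, hkl.symm]
      · rw [zz_ne _ h]; simp [h]
    simp only [zz_act, Finset.sum_sub_distrib] at e
    rw [Equiv.sum_comp (Equiv.swap k (Fin.last n))⁻¹ (zz n _), hz] at e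
    simp [hkl.symm] at e
    have h0 : ((n : ℝ) + 1) ≠ 0 := by positivity
    have h1 : ((n : ℝ) + 1) * l k = 0 := by linarith
    exact (mul_eq_zero.mp h1).resolve_left h0
  rw [hform, hk]; ring

lemma uniq_all (n : ℕ) (hn : 2 ≤ n) (R : (Fin (n + 1) → ℝ) → (Fin (n + 1) → ℝ))
  (hR : ∀ i : Fin (n + 1), ∃ B : Matrix (Fin (n + 1)) (Fin (n + 1)) ℝ,
        ∀ x : Fin (n + 1) → ℝ, R x i = ∑ j, ∑ k, B j k * x j * x k)
  (hE : ∀ σ s x, R (act n σ s x) = act n σ s (R x))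
    : ∃ c : ℝ, ∀ x : Fin (n + 1) → ℝ, R x = c • Qhat n x := by
  choose c hc using fun p : Fin (n + 1) => fun hp => uniq_ne n hn R hR hE p hp
  obtain ⟨k, -, hkl⟩ := exists_other n hn (Fin.last n)
  refine ⟨c k hkl, fun x => ?_⟩
  funext p
  rw [Pi.smul_apply, smul_eq_mul]
  by_cases hp : p = Fin.last n
  · subst hp
    rw [uniq_last n hn R hR hE, Qhat_last, mul_zero]
  · rw [hc p hp]
    congr 1
    have e := congrFun (hE (Equiv.swap p k) 1 (Pi.single k 1)) p
    have e' := congrFun (Qhat_act n hn (Equiv.swap p k) 1 (Pi.single k 1)) p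
    rw [act_swap_single n hp hkl, Equiv.swap_apply_left, hc p hp, hc k hkl, e',
      act_swap_single n hp hkl, Equiv.swap_apply_left] at e
    have hq : Qhat n (Pi.single k 1) k = 1 := by
      have hn1 : (n : ℝ) - 1 ≠ 0 := by
        have : (2 : ℝ) ≤ n := by exact_mod_cast hn
        linarith
      have hz : zz n (Pi.single k 1) = Pi.single k 1 := by
        funext i
        by_cases h : i = Fin.last n
        · subst h; simp [zz_last, hkl.symm]
        · rw [zz_ne _ h]
      rw [Qhat_eq n hn, hz]
      simp
      rw [div_eq_one_iff_eq hn1]; ring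
    rw [hq] at e
    linarith

/-- (i) `Q̂` is invariant under conjugation with every element of `Γ`; (ii) any vector
field with homogeneous quadratic components invariant under conjugation with all of `Γ` is
a scalar multiple of `Q̂`; moreover `Γ ≅ S_{n+1} ⊕ ℤ₂` and `|Γ| = 2·(n+1)!`. -/
theorem stmt19 (n : ℕ) (hn : 2 ≤ n) :
    (∀ γ ∈ Γgrp n, ∀ x : Fin (n + 1) → ℝ,
      Qhat n ((γ : Matrix (Fin (n + 1)) (Fin (n + 1)) ℝ).mulVec x)
        = (γ : Matrix (Fin (n + 1)) (Fin (n + 1)) ℝ).mulVec (Qhat n x)) ∧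
    (∀ R : (Fin (n + 1) → ℝ) → (Fin (n + 1) → ℝ),
      (∀ i : Fin (n + 1), ∃ B : Matrix (Fin (n + 1)) (Fin (n + 1)) ℝ,
        ∀ x : Fin (n + 1) → ℝ, R x i = ∑ j, ∑ k, B j k * x j * x k) →
      (∀ γ ∈ Γgrp n, ∀ x : Fin (n + 1) → ℝ,
        R ((γ : Matrix (Fin (n + 1)) (Fin (n + 1)) ℝ).mulVec x)
          = (γ : Matrix (Fin (n + 1)) (Fin (n + 1)) ℝ).mulVec (R x)) →
      ∃ c : ℝ, ∀ x : Fin (n + 1) → ℝ, R x = c • Qhat n x) ∧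
    Nonempty (Γgrp n ≃* Equiv.Perm (Fin (n + 1)) × Multiplicative (ZMod 2)) ∧
    Nat.card (Γgrp n) = 2 * Nat.factorial (n + 1) := by
  have hr := rho_range n hn
  have hiso : Γgrp n ≃* Equiv.Perm (Fin (n + 1)) × ℤˣ :=
    (MulEquiv.subgroupCongr hr.symm).trans (MonoidHom.ofInjective (rho_injective n)).symm
  have hu : Nat.card ℤˣ = 2 := by simp
  have hm : Nat.card (Multiplicative (ZMod 2)) = 2 := by simp
  have : Fact (Nat.Prime 2) := ⟨Nat.prime_two⟩
  refine ⟨?_, ?_, ?_, ?_⟩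
  · intro γ hγ x
    rw [← hr] at hγ
    obtain ⟨g, rfl⟩ := hγ
    rw [rho_mulVec, rho_mulVec, Qhat_act n hn]
  · intro R hR hE
    refine uniq_all n hn R hR fun σ s x => ?_
    have := hE (rho n (σ, s)) (hr ▸ ⟨_, rfl⟩) x
    rwa [rho_mulVec, rho_mulVec] at this
  · exact ⟨hiso.trans (MulEquiv.prodCongr (MulEquiv.refl _) (mulEquivOfPrimeCardEq hu hm))⟩
  · rw [Nat.card_congr hiso.toEquiv, Nat.card_prod, hu, Nat.card_perm, Nat.card_fin, mul_comm]
end
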